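/- Fix an integer n ≥ 2 and a sequence a = (a_1,…,a_n) of nonnegative integers. Then the specialization of the Tesler polynomial P(a) ∈ ℤ[q,t] at t = 1 equals ∑_{μ ⊆ λ(a)} q^{|λ(a)| − |μ|}, the sum running over all partitions μ contained in λ(a). -/

import Mathlib

open Finset MvPolynomial

noncomputable section

/-- A Tesler matrix associated to the sequence `a`. -/
def IsTesler (n : ℕ) (a : Fin n → ℕ) (M : Fin n → Fin n → ℕ) : Prop :=
  (∀ i j : Fin n, j < i → M i j = 0) ∧
    ∀ i : Fin n,
      M i i + ∑ j ∈ univ.filter (fun j => j < i), M j i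
        = a i + ∑ j ∈ univ.filter (fun j => i < j), M i j

/-- `[m]_{q,t} = ∑_{i=0}^{m-1} q^i t^{m-1-i}` in `ℤ[q,t]`, with `q = X 0`, `t = X 1`. -/
def qtNum (m : ℕ) : MvPolynomial (Fin 2) ℤ :=
  ∑ i ∈ range m, X 0 ^ i * X 1 ^ (m - 1 - i)

/-- `𝔸(0) = 1` and `𝔸(m) = -(1-q)(1-t)[m]_{q,t}` for `m ≥ 1`. -/
def Aqt (m : ℕ) : MvPolynomial (Fin 2) ℤ :=
  if m = 0 then 1 else -((1 - X 0) * (1 - X 1)) * qtNum m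

/-- `B(m) = [m+1]_{q,t} - [m]_{q,t}`. -/
def Bqt (m : ℕ) : MvPolynomial (Fin 2) ℤ := qtNum (m + 1) - qtNum m

/-- The weight `∏_{i} B(m_{i,i+1}) ∏_{j>i+1} 𝔸(m_{ij})` of a Tesler matrix. -/
def teslerWeight (n : ℕ) (M : Fin n → Fin n → ℕ) : MvPolynomial (Fin 2) ℤ :=
  ∏ p ∈ univ.filter (fun p : Fin n × Fin n => p.1 < p.2),
    (if (p.1 : ℕ) + 1 = (p.2 : ℕ) then Bqt (M p.1 p.2) else Aqt (M p.1 p.2))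

/-- The Tesler polynomial `P(a)`, a sum over all Tesler matrices associated to `a`. -/
def teslerPoly (n : ℕ) (a : Fin n → ℕ) : MvPolynomial (Fin 2) ℤ :=
  ∑ᶠ M ∈ {M : Fin n → Fin n → ℕ | IsTesler n a M}, teslerWeight n M

/-- The partition `λ(a) = (a_2 + ⋯ + a_n, a_3 + ⋯ + a_n, …, a_n)`. -/
def lam (n : ℕ) (a : Fin n → ℕ) (k : Fin (n - 1)) : ℕ :=
  ∑ i ∈ univ.filter (fun i : Fin n => (k : ℕ) < (i : ℕ)), a i

theorem tesler_bound (n : ℕ) (a : Fin n → ℕ) (d : ℕ) :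
    ∃ C : ℕ, ∀ M, IsTesler n a M → ∀ i j : Fin n, n ≤ (i : ℕ) + d → M j i ≤ C := by
  induction d with
  | zero => exact ⟨0, fun M _ i j h => absurd i.2 (by omega)⟩
  | succ d ih =>
    obtain ⟨C, hC⟩ := ih
    refine ⟨∑ i, a i + ∑ _i : Fin n, C, fun M hM i j h => ?_⟩
    have h2 := hM.2 i
    have h3 : ∑ j ∈ univ.filter (fun j => i < j), M i j ≤ ∑ _i : Fin n, C := by
      refine (Finset.sum_le_sum (g := fun _ => C) fun k hk => ?_).trans
        (Finset.sum_le_sum_of_subset (Finset.filter_subset _ _))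
      have : i < k := by simpa using hk
      have : (i : ℕ) < k := this
      exact hC M hM k i (by omega)
    have h4 : a i ≤ ∑ i, a i := Finset.single_le_sum (f := a) (fun _ _ => Nat.zero_le _) (mem_univ i)
    rcases lt_trichotomy j i with hj | hj | hj
    · have h5 : M j i ≤ ∑ j ∈ univ.filter (fun j => j < i), M j i :=
        Finset.single_le_sum (f := fun j => M j i) (fun _ _ => Nat.zero_le _) (by simpa using hj)
      omega
    · subst hj; omega
    · rw [hM.1 j i hj]; omega

theorem tesler_finite (n : ℕ) (a : Fin n → ℕ) : {M | IsTesler n a M}.Finite := by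
  obtain ⟨C, hC⟩ := tesler_bound n a n
  refine (Set.finite_Iic (fun _ _ => C : Fin n → Fin n → ℕ)).subset fun M hM => ?_
  exact fun j i => hC M hM i j (by omega)

/-- The specialization at `t = 1`. -/
def spec : MvPolynomial (Fin 2) ℤ →+* Polynomial ℤ :=
  MvPolynomial.eval₂Hom Polynomial.C ![Polynomial.X, 1]

theorem spec_qtNum (m : ℕ) : spec (qtNum m) = ∑ i ∈ range m, Polynomial.X ^ i := by
  simp [spec, qtNum]

theorem spec_B (m : ℕ) : spec (Bqt m) = Polynomial.X ^ m := by
  rw [Bqt, map_sub, spec_qtNum, spec_qtNum, Finset.sum_range_succ]; ring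

theorem spec_A (m : ℕ) : spec (Aqt m) = if m = 0 then 1 else 0 := by
  unfold Aqt
  split_ifs
  · simp
  · simp [spec]

/-- Superdiagonal entries. -/
def sd (n : ℕ) (M : Fin n → Fin n → ℕ) (k : ℕ) : ℕ :=
  if h : k + 1 < n then M ⟨k, by omega⟩ ⟨k + 1, h⟩ else 0

/-- Only superdiagonal entries are nonzero above the diagonal. -/
def Tri (n : ℕ) (M : Fin n → Fin n → ℕ) : Prop :=
  ∀ i j : Fin n, (i : ℕ) + 1 < j → M i j = 0

theorem row_sum (n : ℕ) (M : Fin n → Fin n → ℕ) (h : Tri n M) (i : Fin n) :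
    ∑ j ∈ univ.filter (fun j => i < j), M i j = sd n M i := by
  unfold sd
  split_ifs with hi
  · rw [Finset.sum_eq_single (⟨i + 1, hi⟩ : Fin n)]
    · intro j hj hne
      have : i < j := by simpa using hj
      have h1 : (i : ℕ) < j := this
      have h2 : (j : ℕ) ≠ i + 1 := fun e => hne (Fin.ext e)
      exact h i j (by omega)
    · intro hn
      exact absurd (Finset.mem_filter.2 ⟨mem_univ _, Fin.mk_lt_mk.2 (Nat.lt_succ_self _)⟩) hn
  · apply Finset.sum_eq_zero
    intro j hj
    have : i < j := by simpa using hj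
    have h1 : (i : ℕ) < j := this
    omega

theorem col_sum (n : ℕ) (M : Fin n → Fin n → ℕ) (h : Tri n M) (i : Fin n) :
    ∑ j ∈ univ.filter (fun j => j < i), M j i = if (i : ℕ) = 0 then 0 else sd n M (i - 1) := by
  split_ifs with hi
  · apply Finset.sum_eq_zero
    intro j hj
    have : j < i := by simpa using hj
    have h1 : (j : ℕ) < i := this
    omega
  · have hlt : (i : ℕ) - 1 + 1 < n := by omega
    have he : (⟨(i : ℕ) - 1 + 1, hlt⟩ : Fin n) = i := Fin.ext (by simp; omega)
    rw [Finset.sum_eq_single (⟨i - 1, by omega⟩ : Fin n)]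
    · rw [sd, dif_pos hlt, he]
    · intro j hj hne
      have : j < i := by simpa using hj
      have h1 : (j : ℕ) < i := this
      have h2 : (j : ℕ) ≠ i - 1 := fun e => hne (Fin.ext e)
      exact h j i (by omega)
    · intro hn
      refine absurd ?_ hn
      refine Finset.mem_filter.2 ⟨mem_univ _, ?_⟩
      show (i : ℕ) - 1 < i
      omega

theorem spec_weight_zero (n : ℕ) (M : Fin n → Fin n → ℕ) (h : ¬ Tri n M) :
    spec (teslerWeight n M) = 0 := by
  unfold Tri at h
  push Not at h
  obtain ⟨i, j, hij, hne⟩ := h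
  rw [teslerWeight, map_prod]
  apply Finset.prod_eq_zero (i := (i, j))
  · exact Finset.mem_filter.2 ⟨mem_univ _, Fin.lt_def.2 (show (i : ℕ) < j by omega)⟩
  · rw [if_neg (by simp; omega), spec_A, if_neg hne]

theorem spec_weight_tri (n : ℕ) (M : Fin n → Fin n → ℕ) (h : Tri n M) :
    spec (teslerWeight n M) = Polynomial.X ^ (∑ k : Fin (n - 1), sd n M k) := by
  rw [teslerWeight, map_prod, ← Finset.prod_pow_eq_pow_sum]
  symm
  have hk : ∀ k : Fin (n - 1), (k : ℕ) + 1 < n := fun k => by omega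
  refine Finset.prod_of_injOn
    (fun k : Fin (n - 1) => ((⟨k, by omega⟩, ⟨k + 1, hk k⟩) : Fin n × Fin n)) ?_ ?_ ?_ ?_
  · intro k _ l _ hkl
    simp at hkl
    exact Fin.ext hkl
  · intro k _
    simp
  · rintro ⟨i, j⟩ hp hnot
    have hlt : i < j := by simpa using hp
    have hlt' : (i : ℕ) < j := hlt
    have hne : ¬ (i : ℕ) + 1 = j := by
      intro e
      apply hnot
      refine ⟨⟨i, by omega⟩, by simp, ?_⟩
      simp [Fin.ext_iff, e]
    simp only [if_neg hne]
    rw [spec_A, if_pos (h i j (by omega))]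
  · intro k _
    simp only [if_true]
    rw [spec_B, sd, dif_pos (hk k)]

/-- The tails of `a`, for every natural index. -/
def tl (n : ℕ) (a : Fin n → ℕ) (k : ℕ) : ℕ :=
  ∑ i ∈ univ.filter (fun i : Fin n => k < (i : ℕ)), a i

theorem tl_rec (n : ℕ) (a : Fin n → ℕ) (k : ℕ) (h : k + 1 < n) :
    tl n a k = a ⟨k + 1, h⟩ + tl n a (k + 1) := by
  unfold tl
  rw [← Finset.sum_insert (f := a) (by simp)]
  congr 1
  ext i
  simp [Fin.ext_iff]
  omega

theorem tl_last (n : ℕ) (a : Fin n → ℕ) (k : ℕ) (h : n ≤ k + 1) : tl n a k = 0 := by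
  apply Finset.sum_eq_zero
  intro i hi
  have : k < (i : ℕ) := by simpa using hi
  omega

theorem tri_tesler_iff (n : ℕ) (a : Fin n → ℕ) (M : Fin n → Fin n → ℕ) (h : Tri n M) :
    IsTesler n a M ↔ (∀ i j : Fin n, j < i → M i j = 0) ∧
      ∀ i : Fin n, M i i + (if (i : ℕ) = 0 then 0 else sd n M (i - 1)) = a i + sd n M i := by
  unfold IsTesler
  simp only [row_sum n M h, col_sum n M h]

theorem sd_step (n : ℕ) (a : Fin n → ℕ) (M : Fin n → Fin n → ℕ) (h : Tri n M)
    (hM : IsTesler n a M) (k : ℕ) (hk : k + 1 < n) :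
    sd n M k ≤ a ⟨k + 1, hk⟩ + sd n M (k + 1) := by
  have := ((tri_tesler_iff n a M h).1 hM).2 ⟨k + 1, hk⟩
  simp at this
  omega

theorem sd_le (n : ℕ) (a : Fin n → ℕ) (M : Fin n → Fin n → ℕ) (h : Tri n M)
    (hM : IsTesler n a M) (d k : ℕ) (hd : n ≤ k + d) : sd n M k ≤ tl n a k := by
  induction d generalizing k with
  | zero => rw [sd, dif_neg (by omega)]; omega
  | succ d ih =>
    by_cases hk : k + 1 < n
    · have h1 := sd_step n a M h hM k hk
      have h2 := ih (k + 1) (by omega)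
      rw [tl_rec n a k hk]; omega
    · rw [sd, dif_neg hk]; omega

theorem diff_anti (n : ℕ) (a : Fin n → ℕ) (M : Fin n → Fin n → ℕ) (h : Tri n M)
    (hM : IsTesler n a M) : Antitone (fun k => tl n a k - sd n M k) := by
  apply antitone_nat_of_succ_le
  intro k
  by_cases hk : k + 1 < n
  · have h1 := sd_step n a M h hM k hk
    have h3 := tl_rec n a k hk
    omega
  · rw [tl_last n a (k + 1) (by omega)]; omega

/-- The superdiagonal attached to a partition. -/
def xs (n : ℕ) (a : Fin n → ℕ) (μ : Fin (n - 1) → ℕ) (k : ℕ) : ℕ :=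
  if h : k < n - 1 then tl n a k - μ ⟨k, h⟩ else 0

/-- The Tesler matrix attached to a partition. -/
def ofPart (n : ℕ) (a : Fin n → ℕ) (μ : Fin (n - 1) → ℕ) (i j : Fin n) : ℕ :=
  if (i : ℕ) = j then a i + xs n a μ i - (if (i : ℕ) = 0 then 0 else xs n a μ (i - 1))
  else if (i : ℕ) + 1 = j then xs n a μ i else 0

theorem mk_tri (n : ℕ) (a : Fin n → ℕ) (μ : Fin (n - 1) → ℕ) : Tri n (ofPart n a μ) := by
  intro i j hij
  rw [ofPart, if_neg (by omega), if_neg (by omega)]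

theorem mk_sd (n : ℕ) (a : Fin n → ℕ) (μ : Fin (n - 1) → ℕ) (k : ℕ) :
    sd n (ofPart n a μ) k = xs n a μ k := by
  unfold sd
  split_ifs with h
  · simp [ofPart]
  · rw [xs, dif_neg (by omega)]

theorem xs_step (n : ℕ) (a : Fin n → ℕ) (μ : Fin (n - 1) → ℕ)
    (h1 : ∀ k l : Fin (n - 1), k ≤ l → μ l ≤ μ k) (h2 : ∀ k : Fin (n - 1), μ k ≤ tl n a k)
    (k : ℕ) (hk : k + 1 < n) : xs n a μ k ≤ a ⟨k + 1, hk⟩ + xs n a μ (k + 1) := by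
  have h3 := tl_rec n a k hk
  unfold xs
  rw [dif_pos (by omega)]
  split_ifs with h
  · have h4 := h1 ⟨k, by omega⟩ ⟨k + 1, h⟩ (by simp [Fin.le_def])
    have h5 := h2 ⟨k + 1, h⟩
    simp only at h5
    omega
  · have := tl_last n a (k + 1) (by omega)
    omega

theorem mk_tesler (n : ℕ) (a : Fin n → ℕ) (μ : Fin (n - 1) → ℕ)
    (h1 : ∀ k l : Fin (n - 1), k ≤ l → μ l ≤ μ k) (h2 : ∀ k : Fin (n - 1), μ k ≤ tl n a k) :
    IsTesler n a (ofPart n a μ) := by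
  rw [tri_tesler_iff n a _ (mk_tri n a μ)]
  refine ⟨fun i j hij => ?_, ?_⟩
  · have : (j : ℕ) < i := hij
    rw [ofPart, if_neg (by omega), if_neg (by omega)]
  · rintro ⟨i, hi⟩
    simp only [mk_sd]
    rcases i with _ | i
    · simp [ofPart]
    · have := xs_step n a μ h1 h2 i hi
      simp [ofPart]
      omega

theorem tri_ext (n : ℕ) (a : Fin n → ℕ) (M N : Fin n → Fin n → ℕ) (h : Tri n M) (h' : Tri n N)
    (hM : IsTesler n a M) (hN : IsTesler n a N) (he : ∀ k, sd n M k = sd n N k) : M = N := by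
  funext i j
  have e1 := ((tri_tesler_iff n a M h).1 hM).2 i
  have e2 := ((tri_tesler_iff n a N h').1 hN).2 i
  simp only [he] at e1
  rcases lt_trichotomy (i : ℕ) j with hij | hij | hij
  · by_cases h3 : (i : ℕ) + 1 = j
    · have h4 := he i
      have h5 : (i : ℕ) + 1 < n := by omega
      have h6 : (⟨(i : ℕ) + 1, h5⟩ : Fin n) = j := Fin.ext h3
      rw [sd, sd, dif_pos h5, dif_pos h5, h6] at h4
      exact h4
    · rw [h i j (by omega), h' i j (by omega)]
  · have : i = j := Fin.ext hij
    subst this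
    omega
  · rw [hM.1 i j hij, hN.1 i j hij]

theorem teslerPoly_t_eq_one (n : ℕ) (hn : 2 ≤ n) (a : Fin n → ℕ) :
    MvPolynomial.eval₂ Polynomial.C ![Polynomial.X, 1] (teslerPoly n a)
      = ∑ᶠ μ ∈ {μ : Fin (n - 1) → ℕ |
            (∀ k l : Fin (n - 1), k ≤ l → μ l ≤ μ k) ∧ ∀ k, μ k ≤ lam n a k},
          (Polynomial.X : Polynomial ℤ) ^ ((∑ k, lam n a k) - (∑ k, μ k)) := by
  change spec (teslerPoly n a) = _
  have hfin := tesler_finite n a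
  have hlam : ∀ k : Fin (n - 1), lam n a k = tl n a k := fun k => rfl
  have e1 : spec (teslerPoly n a)
      = ∑ᶠ M ∈ {M : Fin n → Fin n → ℕ | IsTesler n a M}, spec (teslerWeight n M) := by
    rw [teslerPoly, finsum_mem_eq_finite_toFinset_sum _ hfin,
      finsum_mem_eq_finite_toFinset_sum _ hfin, map_sum]
  have e2 : ∑ᶠ M ∈ {M : Fin n → Fin n → ℕ | IsTesler n a M}, spec (teslerWeight n M)
      = ∑ᶠ M ∈ {M : Fin n → Fin n → ℕ | IsTesler n a M ∧ Tri n M}, spec (teslerWeight n M) := by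
    apply finsum_mem_inter_support_eq'
    intro M hM
    have : Tri n M := by
      by_contra hc
      exact hM (spec_weight_zero n M hc)
    simp [this]
  rw [e1, e2]
  refine finsum_mem_eq_of_bijOn (fun M k => tl n a k - sd n M k) ⟨?_, ?_, ?_⟩ ?_
  · rintro M ⟨hM, ht⟩
    exact ⟨fun k l hkl => diff_anti n a M ht hM hkl, fun k => Nat.sub_le _ _⟩
  · rintro M ⟨hM, ht⟩ N ⟨hN, ht'⟩ hMN
    apply tri_ext n a M N ht ht' hM hN
    intro k
    by_cases hk : k < n - 1
    · have h1 := congrFun hMN ⟨k, hk⟩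
      simp only at h1
      have h2 := sd_le n a M ht hM n k (by omega)
      have h3 := sd_le n a N ht' hN n k (by omega)
      omega
    · rw [sd, sd, dif_neg (by omega), dif_neg (by omega)]
  · rintro μ ⟨h1, h2⟩
    refine ⟨ofPart n a μ, ⟨mk_tesler n a μ h1 h2, mk_tri n a μ⟩, ?_⟩
    funext k
    have h3 := h2 k
    rw [hlam] at h3
    simp only [mk_sd, xs, dif_pos k.2]
    change tl n a k - (tl n a k - μ k) = μ k
    exact Nat.sub_sub_self h3
  · rintro M ⟨hM, ht⟩
    rw [spec_weight_tri n M ht]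
    congr 1
    have : ∑ k : Fin (n - 1), tl n a k
        = ∑ k : Fin (n - 1), (tl n a k - sd n M k) + ∑ k : Fin (n - 1), sd n M k := by
      rw [← Finset.sum_add_distrib]
      refine Finset.sum_congr rfl fun k _ => ?_
      have h2 := sd_le n a M ht hM n k (by omega)
      omega
    simp only [hlam]
    omega
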